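/- Suppose a ∼_{(0;M)} b, Ext^1_R(R/a, M) = Ext^1_R(R/b, M) = 0, x is a non-zerodivisor on M, and (a, x)M ≠ M ≠ (b, x)M. Then (a, x) and (b, x) are linked by 0 over M/xM: 0 :_{M/xM} a = b(M/xM) and 0 :_{M/xM} b = a(M/xM). -/

import Mathlib

open CategoryTheory

/-- The colon submodule `N :_M a = {m ∈ M | a m ⊆ N}`. -/
def Submodule.colonBy {R M : Type*} [CommRing R] [AddCommGroup M] [Module R M]
    (N : Submodule R M) (a : Ideal R) : Submodule R M :=
  ⨅ r ∈ a, N.comap (LinearMap.lsmul R M r)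

/-- If `Ext^{n+1}(X, Y) = 0`, every `(n+1)`-cocycle of a projective resolution of `X` with values in
`Y` is a coboundary. -/
theorem CategoryTheory.ProjectiveResolution.exists_d_comp_eq_of_subsingleton_ext
    {R C : Type*} [Ring R] [Category* C] [Abelian C] [Linear R C] [EnoughProjectives C]
    {X Y : C} (P : ProjectiveResolution X) (n : ℕ)
    (h : Subsingleton (((Ext R C (n + 1)).obj (Opposite.op X)).obj Y))
    (φ : P.complex.X (n + 1) ⟶ Y) (hφ : P.complex.d (n + 2) (n + 1) ≫ φ = 0) :
    ∃ ψ : P.complex.X n ⟶ Y, P.complex.d (n + 1) n ≫ ψ = φ := by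
  have hzero : Limits.IsZero ((P.complex.linearYonedaObj R Y).homology (n + 1)) :=
    (ModuleCat.isZero_of_subsingleton _).of_iso (P.isoExt (R := R) (n + 1) Y).symm
  rw [← HomologicalComplex.exactAt_iff_isZero_homology,
    HomologicalComplex.exactAt_iff' _ n (n + 1) (n + 2) (by simp) (by simp),
    ShortComplex.moduleCat_exact_iff] at hzero
  exact hzero φ hφ

universe u in
/-- If `Ext¹(R/a, M) = 0`, every linear map `a → M` is given by scaling an element of `M`. -/
theorem Ideal.exists_forall_eq_smul_of_subsingleton_ext {R M : Type u} [CommRing R]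
    [AddCommGroup M] [Module R M] (a : Ideal R)
    (h : Subsingleton
      (((Ext R (ModuleCat R) 1).obj (Opposite.op (ModuleCat.of R (R ⧸ a)))).obj
        (ModuleCat.of R M)))
    (f : a →ₗ[R] M) : ∃ m : M, ∀ r : a, f r = (r : R) • m := by
  let P := ProjectiveResolution.of (ModuleCat.of R (R ⧸ a))
  let ε : P.complex.X 0 →ₗ[R] R ⧸ a := (P.π.f 0).hom
  let d₁ : P.complex.X 1 →ₗ[R] P.complex.X 0 := (P.complex.d 1 0).hom
  let d₂ : P.complex.X 2 →ₗ[R] P.complex.X 1 := (P.complex.d 2 1).hom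
  have hd (p) : d₁ (d₂ p) = 0 := congr($(P.complex.d_comp_d 2 1 0) p)
  have hε (p) : ε (d₁ p) = 0 := congr($(P.complex_d_comp_π_f_zero) p)
  have hexact (q) (hq : ε q = 0) : ∃ p, d₁ p = q :=
    (ShortComplex.moduleCat_exact_iff _).1 P.exact₀ q hq
  have hsurj : Function.Surjective ε :=
    (ModuleCat.epi_iff_surjective (P.π.f 0)).1 inferInstance
  have : Module.Projective R (P.complex.X 0) :=
    (IsProjective.iff_projective (P.complex.X 0)).2 (P.projective 0)
  obtain ⟨π, hπ⟩ := Module.projective_lifting_property a.mkQ ε a.mkQ_surjective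
  have hmk (p) : Ideal.Quotient.mk a (π p) = ε p := congr($hπ p)
  have hmem (p) : π (d₁ p) ∈ a := by
    rw [← Ideal.Quotient.eq_zero_iff_mem, hmk, hε]
  let φ : P.complex.X 1 →ₗ[R] M := f ∘ₗ (π ∘ₗ d₁).codRestrict a hmem
  obtain ⟨ψ, hψ⟩ := P.exists_d_comp_eq_of_subsingleton_ext 0 h (ModuleCat.ofHom φ) (by
    ext p
    have : (π ∘ₗ d₁).codRestrict a hmem (d₂ p) = 0 := Subtype.ext (by simp [hd])
    change f ((π ∘ₗ d₁).codRestrict a hmem (d₂ p)) = 0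
    rw [this, map_zero])
  have hψ' (p) : ψ.hom (d₁ p) = f ⟨π (d₁ p), hmem p⟩ := congr($hψ p)
  obtain ⟨e, he⟩ := hsurj 1
  have hc : π e - 1 ∈ a := by
    rw [← Ideal.Quotient.eq_zero_iff_mem, map_sub, hmk, he, map_one, sub_self]
  refine ⟨ψ.hom e - f ⟨π e - 1, hc⟩, fun r ↦ ?_⟩
  obtain ⟨p, hp⟩ := hexact ((r : R) • e) (by
    rw [map_smul, he, Algebra.smul_def, mul_one]
    exact Ideal.Quotient.eq_zero_iff_mem.2 r.2)
  have key := hψ' p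
  have hsplit : (⟨π (d₁ p), hmem p⟩ : a) = r + (r : R) • ⟨π e - 1, hc⟩ :=
    Subtype.ext (by simp [hp, mul_sub])
  rw [hsplit, hp, map_smul, map_add, map_smul] at key
  rw [smul_sub, key, add_sub_cancel_right]

section colonBy

variable {R M : Type*} [CommRing R] [AddCommGroup M] [Module R M]

theorem Submodule.mem_colonBy {N : Submodule R M} {a : Ideal R} {m : M} :
    m ∈ N.colonBy a ↔ ∀ r ∈ a, r • m ∈ N := by
  simp [Submodule.colonBy]

/-- If every linear map `a → M` is given by scaling an element of `M` and `x` is `M`-regular, then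
`0 :_M a = bM` descends to `M/xM`. -/
theorem Submodule.colonBy_bot_quotient_eq {a b : Ideal R}
    (hab : (⊥ : Submodule R M).colonBy a = b • ⊤)
    (hext : ∀ f : a →ₗ[R] M, ∃ m : M, ∀ r : a, f r = (r : R) • m)
    {x : R} (hx : IsSMulRegular M x) :
    (⊥ : Submodule R (M ⧸ (Ideal.span {x} • ⊤ : Submodule R M))).colonBy a = b • ⊤ := by
  set N : Submodule R M := Ideal.span {x} • ⊤
  have hN (m : M) : m ∈ N ↔ ∃ y, x • y = m := by
    simp [N, Submodule.ideal_span_singleton_smul, Submodule.mem_smul_pointwise_iff_exists]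
  have hmap : (b • ⊤ : Submodule R (M ⧸ N)) = (b • ⊤ : Submodule R M).map N.mkQ := by
    rw [Submodule.map_smul'', Submodule.map_top, Submodule.range_mkQ]
  rw [hmap, ← hab]
  ext q
  obtain ⟨m, rfl⟩ := N.mkQ_surjective q
  simp only [Submodule.mem_map, Submodule.mem_colonBy, Submodule.mem_bot]
  constructor
  · intro hm
    have hdiv (r : a) : ∃ y, x • y = (r : R) • m := by
      rw [← hN, ← Submodule.Quotient.mk_eq_zero]
      exact hm r r.2
    choose f hf using hdiv
    let g : a →ₗ[R] M :=
      { toFun := f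
        map_add' := fun r s ↦ hx (by simp only [smul_add, hf, add_smul, Submodule.coe_add])
        map_smul' := fun t r ↦ hx (by
          simp only [hf, RingHom.id_apply, smul_comm x t, SetLike.val_smul, smul_assoc]) }
    obtain ⟨n, hn⟩ := hext g
    refine ⟨m - x • n, fun r hr ↦ ?_, ?_⟩
    · rw [smul_sub, smul_comm r x n, ← hn ⟨r, hr⟩, sub_eq_zero]
      exact (hf ⟨r, hr⟩).symm
    · have hxn : N.mkQ (x • n) = 0 := (Submodule.Quotient.mk_eq_zero N).2 ((hN _).2 ⟨n, rfl⟩)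
      rw [map_sub, hxn, sub_zero]
  · rintro ⟨m', hm', h⟩ r hr
    rw [← h, ← map_smul, hm' r hr, map_zero]

end colonBy

/-- If `a ∼_{(0;M)} b`, `Ext¹_R(R/a, M) = Ext¹_R(R/b, M) = 0`, `x` is a
non-zerodivisor on `M` and `(a,x)M ≠ M ≠ (b,x)M`, then `(a,x)` and `(b,x)` are linked
by `0` over `M/xM`: `0 :_{M/xM} a = b·(M/xM)` and `0 :_{M/xM} b = a·(M/xM)`. -/
theorem linked_quot_of_linked {R M : Type} [CommRing R] [IsNoetherianRing R]
    [AddCommGroup M] [Module R M] [Module.Finite R M]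
    (a b : Ideal R)
    (hab : (⊥ : Submodule R M).colonBy a = b • ⊤ ∧ (⊥ : Submodule R M).colonBy b = a • ⊤)
    (haM : a • (⊤ : Submodule R M) ≠ ⊤) (hbM : b • (⊤ : Submodule R M) ≠ ⊤)
    (hexta : Subsingleton
      (((Ext R (ModuleCat R) 1).obj (Opposite.op (ModuleCat.of R (R ⧸ a)))).obj
        (ModuleCat.of R M)))
    (hextb : Subsingleton
      (((Ext R (ModuleCat R) 1).obj (Opposite.op (ModuleCat.of R (R ⧸ b)))).obj
        (ModuleCat.of R M)))
    (x : R) (hx : IsSMulRegular M x)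
    (haxM : (a ⊔ Ideal.span {x}) • (⊤ : Submodule R M) ≠ ⊤)
    (hbxM : (b ⊔ Ideal.span {x}) • (⊤ : Submodule R M) ≠ ⊤) :
    (⊥ : Submodule R (M ⧸ (Ideal.span {x} • ⊤ : Submodule R M))).colonBy a =
        b • ⊤ ∧
      (⊥ : Submodule R (M ⧸ (Ideal.span {x} • ⊤ : Submodule R M))).colonBy b =
        a • ⊤ := by
  exact ⟨Submodule.colonBy_bot_quotient_eq hab.1
      (a.exists_forall_eq_smul_of_subsingleton_ext hexta) hx,
    Submodule.colonBy_bot_quotient_eq hab.2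
      (b.exists_forall_eq_smul_of_subsingleton_ext hextb) hx⟩
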